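/- Let $C \geq 1$, $M > 0$ and $T > 0$ satisfy $2C^2 M T < 1$. Let $(a_n)_{n \geq 0}$ be a sequence of continuous functions $a_n : [0,T] \to [0,\infty)$ with $a_0 \equiv 0$, and suppose that for every $n \geq 0$ and every $t \in [0,T]$, $a_{n+1}(t) \leq C e^{C \int_0^t a_n(\tau)\,d\tau} M + C \int_0^t e^{C \int_\tau^t a_n(\sigma)\,d\sigma} a_n(\tau)^2 \, d\tau$. Then for every $n \geq 0$ and every $t \in [0,T]$, $a_n(t) \leq \dfrac{C M}{1 - 2 C^2 M t}$. -/

import Mathlib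

open MeasureTheory

/-!
If equality held in the recursion at a fixed point `y`, then `y` would solve
`y' = (C y) y + C y ^ 2 = 2 C y ^ 2` with `y 0 = C M`, because the right-hand side is the variation
of constants formula for this equation. The solution of this Riccati problem is
`C M / (1 - 2 C ^ 2 M t)`, and since the right-hand side of the recursion is monotone in the
iterate, the bound passes from `a n` to `a (n + 1)`.
-/

section Integrals

open Set

theorem intervalIntegral_mono_of_nonneg {f g : ℝ → ℝ} {a b : ℝ} {μ : Measure ℝ} (hab : a ≤ b)
    (hf : ∀ x ∈ Icc a b, 0 ≤ f x) (hg : IntervalIntegrable g μ a b)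
    (hfg : ∀ x ∈ Icc a b, f x ≤ g x) : ∫ x in a..b, f x ∂μ ≤ ∫ x in a..b, g x ∂μ := by
  rw [intervalIntegral.integral_of_le hab, intervalIntegral.integral_of_le hab]
  exact integral_mono_of_nonneg
    (ae_restrict_of_forall_mem measurableSet_Ioc fun x hx => hf x (Ioc_subset_Icc_self hx)) hg.1
    (ae_restrict_of_forall_mem measurableSet_Ioc fun x hx => hfg x (Ioc_subset_Icc_self hx))

theorem continuousOn_exp_integral_left {p : ℝ → ℝ} {a b : ℝ}
    (hp : IntervalIntegrable p volume a b) :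
    ContinuousOn (fun τ => Real.exp (∫ σ in τ..b, p σ)) (uIcc a b) :=
  (intervalIntegral.continuousOn_primitive_interval_left ((intervalIntegrable_iff').1 hp)).rexp

theorem hasDerivAt_exp_integral_left {p : ℝ → ℝ} {a b τ : ℝ} (hp : ContinuousOn p (Icc a b))
    (hτ : τ ∈ Ioo a b) :
    HasDerivAt (fun τ => Real.exp (∫ σ in τ..b, p σ))
      (Real.exp (∫ σ in τ..b, p σ) * -p τ) τ := by
  have hint : IntervalIntegrable p volume τ b :=
    (hp.mono (Icc_subset_Icc_left hτ.1.le)).intervalIntegrable_of_Icc hτ.2.le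
  exact (intervalIntegral.integral_hasDerivAt_left hint
    ((hp.mono Ioo_subset_Icc_self).stronglyMeasurableAtFilter isOpen_Ioo τ hτ)
    (hp.continuousAt (Icc_mem_nhds hτ.1 hτ.2))).exp

theorem variation_of_constants {E : Type*} [NormedAddCommGroup E] [NormedSpace ℝ E]
    [CompleteSpace E] {y q : ℝ → E} {p : ℝ → ℝ} {a b : ℝ} (hab : a ≤ b)
    (hp : ContinuousOn p (Icc a b)) (hq : IntervalIntegrable q volume a b)
    (hy : ContinuousOn y (Icc a b))
    (hderiv : ∀ τ ∈ Ioo a b, HasDerivAt y (p τ • y τ + q τ) τ) :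
    y b = Real.exp (∫ σ in a..b, p σ) • y a
      + ∫ τ in a..b, Real.exp (∫ σ in τ..b, p σ) • q τ := by
  have hexp := continuousOn_exp_integral_left (hp.intervalIntegrable_of_Icc hab)
  have hint : IntervalIntegrable (fun τ => Real.exp (∫ σ in τ..b, p σ) • q τ) volume a b :=
    hq.continuousOn_smul hexp
  rw [uIcc_of_le hab] at hexp
  have hderiv' : ∀ τ ∈ Ioo a b, HasDerivAt (fun τ => Real.exp (∫ σ in τ..b, p σ) • y τ)
      (Real.exp (∫ σ in τ..b, p σ) • q τ) τ := fun τ hτ => by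
    convert (hasDerivAt_exp_integral_left hp hτ).fun_smul (hderiv τ hτ) using 1
    module
  rw [intervalIntegral.integral_eq_sub_of_hasDerivAt_of_le hab (hexp.smul hy) hderiv' hint]
  simp

end Integrals

section Picard

open Set

/-- The right-hand side of the recursive estimate, as a functional of the current iterate `f`. -/
noncomputable def picardMajorant (C M : ℝ) (f : ℝ → ℝ) (t : ℝ) : ℝ :=
  C * Real.exp (C * ∫ τ in (0 : ℝ)..t, f τ) * M
    + C * ∫ τ in (0 : ℝ)..t, Real.exp (C * ∫ σ in τ..t, f σ) * f τ ^ 2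

/-- The solution of the Riccati problem `y' = 2 C y ^ 2`, `y 0 = C M`; it is meaningful only before
the blow-up time, that is, where `2 * C ^ 2 * M * t < 1`. -/
noncomputable def riccatiBound (C M t : ℝ) : ℝ :=
  C * M / (1 - 2 * C ^ 2 * M * t)

variable {C M t : ℝ}

theorem picardMajorant_mono {f g : ℝ → ℝ} (hC : 0 ≤ C) (hM : 0 ≤ M) (ht : 0 ≤ t)
    (hf : IntervalIntegrable f volume 0 t) (hg : IntervalIntegrable g volume 0 t)
    (hg2 : IntervalIntegrable (fun τ => g τ ^ 2) volume 0 t)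
    (hf0 : ∀ τ ∈ Icc 0 t, 0 ≤ f τ) (hfg : ∀ τ ∈ Icc 0 t, f τ ≤ g τ) :
    picardMajorant C M f t ≤ picardMajorant C M g t := by
  have hexp : ∀ τ ∈ Icc 0 t,
      Real.exp (C * ∫ σ in τ..t, f σ) ≤ Real.exp (C * ∫ σ in τ..t, g σ) := fun τ hτ => by
    have hsub : uIcc τ t ⊆ uIcc 0 t := uIcc_subset_uIcc_right (Icc_subset_uIcc hτ)
    gcongr
    exact intervalIntegral.integral_mono_on hτ.2 (hf.mono_set hsub) (hg.mono_set hsub)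
      fun σ hσ => hfg σ ⟨hτ.1.trans hσ.1, hσ.2⟩
  have hint : IntervalIntegrable (fun τ => Real.exp (C * ∫ σ in τ..t, g σ) * g τ ^ 2)
      volume 0 t := by
    simp only [← intervalIntegral.integral_const_mul]
    exact hg2.continuousOn_mul (continuousOn_exp_integral_left (hg.const_mul C))
  have hduhamel : ∫ τ in (0 : ℝ)..t, Real.exp (C * ∫ σ in τ..t, f σ) * f τ ^ 2
      ≤ ∫ τ in (0 : ℝ)..t, Real.exp (C * ∫ σ in τ..t, g σ) * g τ ^ 2 :=
    intervalIntegral_mono_of_nonneg ht (fun τ _ => by positivity) hint fun τ hτ =>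
      mul_le_mul (hexp τ hτ) (pow_le_pow_left₀ (hf0 τ hτ) (hfg τ hτ) 2) (by positivity)
        (by positivity)
  have hinit := hexp 0 (left_mem_Icc.2 ht)
  unfold picardMajorant
  gcongr

theorem picardMajorant_eq_self_of_hasDerivAt {y : ℝ → ℝ} (ht : 0 ≤ t)
    (hy : ContinuousOn y (Icc 0 t)) (hy0 : y 0 = C * M)
    (hderiv : ∀ τ ∈ Ioo 0 t, HasDerivAt y (2 * C * y τ ^ 2) τ) :
    picardMajorant C M y t = y t := by
  have hduhamel := variation_of_constants (p := fun τ => C * y τ) (q := fun τ => C * y τ ^ 2) ht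
    (hy.const_mul C) (((hy.pow 2).const_mul C).intervalIntegrable_of_Icc ht) hy
    fun τ hτ => (hderiv τ hτ).congr_deriv (by rw [smul_eq_mul]; ring)
  simp only [smul_eq_mul, intervalIntegral.integral_const_mul, mul_left_comm _ C, hy0] at hduhamel
  rw [hduhamel, picardMajorant]
  ring

theorem two_mul_sq_mul_mul_lt_one_of_le {s : ℝ} (hM : 0 ≤ M) (hst : s ≤ t)
    (ht : 2 * C ^ 2 * M * t < 1) : 2 * C ^ 2 * M * s < 1 :=
  (mul_le_mul_of_nonneg_left hst (by positivity)).trans_lt ht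

theorem riccatiBound_nonneg (hC : 0 ≤ C) (hM : 0 ≤ M) (ht : 2 * C ^ 2 * M * t < 1) :
    0 ≤ riccatiBound C M t :=
  div_nonneg (mul_nonneg hC hM) (sub_pos.2 ht).le

theorem hasDerivAt_riccatiBound (ht : 2 * C ^ 2 * M * t < 1) :
    HasDerivAt (riccatiBound C M) (2 * C * riccatiBound C M t ^ 2) t := by
  have hden : 1 - 2 * C ^ 2 * M * t ≠ 0 := (sub_pos.2 ht).ne'
  have hlin : HasDerivAt (fun t => 1 - 2 * C ^ 2 * M * t) (-(2 * C ^ 2 * M)) t := by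
    simpa using ((hasDerivAt_id t).const_mul (2 * C ^ 2 * M)).const_sub 1
  refine ((hasDerivAt_const t (C * M)).fun_div hlin hden).congr_deriv ?_
  rw [riccatiBound]
  field_simp
  ring

theorem picardMajorant_le_riccatiBound {f : ℝ → ℝ} (hC : 0 ≤ C) (hM : 0 ≤ M) (ht : 0 ≤ t)
    (hCMt : 2 * C ^ 2 * M * t < 1) (hf : IntervalIntegrable f volume 0 t)
    (hf0 : ∀ τ ∈ Icc 0 t, 0 ≤ f τ) (hfle : ∀ τ ∈ Icc 0 t, f τ ≤ riccatiBound C M τ) :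
    picardMajorant C M f t ≤ riccatiBound C M t := by
  have hderiv : ∀ τ ∈ Icc 0 t,
      HasDerivAt (riccatiBound C M) (2 * C * riccatiBound C M τ ^ 2) τ := fun τ hτ =>
    hasDerivAt_riccatiBound (two_mul_sq_mul_mul_lt_one_of_le hM hτ.2 hCMt)
  have hcont : ContinuousOn (riccatiBound C M) (Icc 0 t) := HasDerivAt.continuousOn hderiv
  calc picardMajorant C M f t
      ≤ picardMajorant C M (riccatiBound C M) t :=
        picardMajorant_mono hC hM ht hf (hcont.intervalIntegrable_of_Icc ht)
          ((hcont.pow 2).intervalIntegrable_of_Icc ht) hf0 hfle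
    _ = riccatiBound C M t :=
        picardMajorant_eq_self_of_hasDerivAt ht hcont (by simp [riccatiBound])
          fun τ hτ => hderiv τ (Ioo_subset_Icc_self hτ)

theorem picard_uniform_bound_general {T : ℝ} {a : ℕ → ℝ → ℝ} (hC : 0 ≤ C) (hM : 0 ≤ M)
    (hCMT : 2 * C ^ 2 * M * T < 1) (hint : ∀ n, IntegrableOn (a n) (Icc 0 T))
    (hnonneg : ∀ n, ∀ t ∈ Icc 0 T, 0 ≤ a n t)
    (h0 : ∀ t ∈ Icc 0 T, a 0 t ≤ riccatiBound C M t)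
    (hrec : ∀ n, ∀ t ∈ Icc 0 T, a (n + 1) t ≤ picardMajorant C M (a n) t) (n : ℕ) :
    ∀ t ∈ Icc 0 T, a n t ≤ riccatiBound C M t := by
  induction n with
  | zero => exact h0
  | succ n ih =>
    intro t ht
    have hCMt : 2 * C ^ 2 * M * t < 1 := two_mul_sq_mul_mul_lt_one_of_le hM ht.2 hCMT
    have hsub : Icc 0 t ⊆ Icc 0 T := Icc_subset_Icc_right ht.2
    have hint_t : IntervalIntegrable (a n) volume 0 t :=
      (intervalIntegrable_iff_integrableOn_Icc_of_le ht.1).2 ((hint n).mono_set hsub)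
    exact (hrec n t ht).trans <| picardMajorant_le_riccatiBound hC hM ht.1 hCMt hint_t
      (fun τ hτ => hnonneg n τ (hsub hτ)) fun τ hτ => ih τ (hsub hτ)

end Picard

/-- Abstract recursive bound underlying the uniform estimates for the Picard iterates
of the Euler–Poincaré equations. -/
theorem picard_uniform_bound (C M T : ℝ) (a : ℕ → ℝ → ℝ)
    (hC : 1 ≤ C) (hM : 0 < M) (hT : 0 < T)
    (hCMT : 2 * C ^ 2 * M * T < 1)
    (hcont : ∀ n, ContinuousOn (a n) (Set.Icc 0 T))
    (hnonneg : ∀ n, ∀ t ∈ Set.Icc (0 : ℝ) T, 0 ≤ a n t)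
    (h0 : ∀ t ∈ Set.Icc (0 : ℝ) T, a 0 t = 0)
    (hrec : ∀ n, ∀ t ∈ Set.Icc (0 : ℝ) T,
      a (n + 1) t ≤ C * Real.exp (C * ∫ τ in (0 : ℝ)..t, a n τ) * M
        + C * ∫ τ in (0 : ℝ)..t, Real.exp (C * ∫ σ in τ..t, a n σ) * (a n τ) ^ 2) :
    ∀ n, ∀ t ∈ Set.Icc (0 : ℝ) T, a n t ≤ C * M / (1 - 2 * C ^ 2 * M * t) := by
  have hC0 : 0 ≤ C := zero_le_one.trans hC
  exact picard_uniform_bound_general hC0 hM.le hCMT (fun n => (hcont n).integrableOn_Icc) hnonneg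
    (fun t ht => (h0 t ht).trans_le <|
      riccatiBound_nonneg hC0 hM.le (two_mul_sq_mul_mul_lt_one_of_le hM.le ht.2 hCMT)) hrec
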